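/- There is a finite set S of integers ≥ 2, depending only on h (and the choice of the roots z_p), such that for every positive integer d and every integer q ≥ 2, if the derivative h_d' vanishes identically modulo q (i.e. q divides h_d'(n) for every integer n) then q ∈ S. -/

import Mathlib

/-!
Write `h_d = H` and let `n = deg h'`. If `q` divides all values of `H'`, inverting a Vandermonde
matrix shows that `q` divides `s • H'` for the superfactorial `s` of `n`. The leading
coefficient of `H'` then gives `q ∣ s * lc(h') * d ^ (n + 1)`, so it is enough to bound `gcd(q, d)`.

If `p ^ w` divides both `q` and `d`, let `m` be the multiplicity of `z_p` as a zero of `h`. In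
`λ(d) * H'_{m-1} = d ^ m * g(r_d)`, with `g` the Hasse derivative of `h'` of order `m - 1`,
the factor `d ^ m` divides `λ(d)` in `ℤ_p`, so `p ^ w` divides `s * g(r_d)`, hence also `s * g(z_p)`
because `r_d ≡ z_p` modulo `p ^ w`. Finally `g(z_p) ≠ 0`, and the nonzero values of `g` at
roots of `h` divide an integer `N` independent of `p`: the ideals `(g ^ j)` stabilise in the
Artinian ring `ℚ[X] / (h)`, so that `N * g ^ j ∈ (h, g ^ (j + 1))` for some `j` and `N ≠ 0`.
-/

section

open Polynomial

lemma dvd_mul_pow_of_gcd_dvd {α : Type*} [CommMonoidWithZero α] [GCDMonoid α]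
    {q a b d : α} {k : ℕ} (hq : q ∣ a * d ^ k) (hb : gcd q d ∣ b) : q ∣ a * b ^ k :=
  calc q ∣ a * gcd q (d ^ k) := dvd_mul_gcd_of_dvd_mul hq
    _ ∣ a * b ^ k :=
      mul_dvd_mul_left a (gcd_pow_right_dvd_pow_gcd.trans (pow_dvd_pow_of_dvd hb k))

lemma gcd_dvd_of_forall_prime_pow_dvd {q d M : ℤ}
    (hM : ∀ (p : ℕ) [Fact p.Prime] (w : ℕ), (p : ℤ) ^ w ∣ q → (p : ℤ) ^ w ∣ d → (p : ℤ) ^ w ∣ M) :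
    gcd q d ∣ M := by
  rw [← Int.coe_gcd, Int.natCast_dvd, Nat.dvd_iff_prime_pow_dvd_dvd]
  intro p w hp hpw
  have : Fact p.Prime := ⟨hp⟩
  have hpw' : ((p ^ w : ℕ) : ℤ) ∣ Int.gcd q d := Int.natCast_dvd_natCast.2 hpw
  rw [Int.dvd_coe_gcd_iff, Nat.cast_pow] at hpw'
  exact Int.natCast_dvd.1 (by exact_mod_cast hM p w hpw'.1 hpw'.2)

lemma natCast_pow_dvd_natCast_map {p : ℕ} [Fact p.Prime] {lam : ℕ →* ℕ} {m : ℕ}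
    (hlam : p ^ m ∣ lam p) {d : ℕ} (hd : d ≠ 0) :
    (d : ℤ_[p]) ^ m ∣ (lam d : ℤ_[p]) := by
  induction d using induction_on_primes with
  | zero => exact absurd rfl hd
  | one => simp
  | prime_mul l d hl ih =>
    have hprime : (l : ℤ_[p]) ^ m ∣ (lam l : ℤ_[p]) := by
      obtain rfl | hlp := eq_or_ne l p
      · exact_mod_cast Nat.cast_dvd_cast (α := ℤ_[l]) hlam
      · have hcop : p.Coprime l := (Nat.coprime_primes Fact.out hl).2 hlp.symm
        have hunit : IsUnit (l : ℤ_[p]) :=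
          PadicInt.isUnit_iff.2 (PadicInt.norm_natCast_eq_one_iff.2 hcop)
        exact (hunit.pow m).dvd
    rw [map_mul, Nat.cast_mul, Nat.cast_mul, mul_pow]
    exact mul_dvd_mul hprime (ih (right_ne_zero_of_mul hd))

lemma rootMultiplicity_derivative_add_one {R : Type*} [CommRing R] [IsDomain R] [CharZero R]
    {f : R[X]} (hf : f ≠ 0) {z : R} (hz : f.IsRoot z) :
    (derivative f).rootMultiplicity z + 1 = f.rootMultiplicity z := by
  rw [derivative_rootMultiplicity_of_root hz,
    Nat.sub_add_cancel ((rootMultiplicity_pos hf).2 hz)]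

lemma map_hasseDeriv {R S : Type*} [Semiring R] [Semiring S] (φ : R →+* S) (i : ℕ) (F : R[X]) :
    (hasseDeriv i F).map φ = hasseDeriv i (F.map φ) := by
  ext j
  simp only [coeff_map, hasseDeriv_coeff, map_mul, map_natCast]

lemma eval_hasseDeriv_rootMultiplicity_ne_zero {R : Type*} [CommRing R] {F : R[X]} (hF : F ≠ 0)
    (z : R) :
    (hasseDeriv (F.rootMultiplicity z) F).eval z ≠ 0 := by
  rw [← taylor_coeff, rootMultiplicity_eq_natTrailingDegree, ← taylor_apply]
  exact trailingCoeff_nonzero_iff_nonzero.2 ((map_ne_zero_iff _ (taylor_injective z)).2 hF)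

lemma aeval_hasseDeriv_rootMultiplicity_ne_zero {R A : Type*} [CommRing R] [CommRing A]
    [Algebra R A] [FaithfulSMul R A] {F : R[X]} (hF : F ≠ 0) (z : A) :
    aeval z (hasseDeriv ((F.map (algebraMap R A)).rootMultiplicity z) F) ≠ 0 := by
  rw [← eval_map_algebraMap, map_hasseDeriv]
  exact eval_hasseDeriv_rootMultiplicity_ne_zero
    ((Polynomial.map_ne_zero_iff (FaithfulSMul.algebraMap_injective R A)).2 hF) z

lemma exists_pow_mem_span_pair_pow_succ {K : Type*} [Field K] {f : K[X]} (hf : f ≠ 0) (g : K[X]) :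
    ∃ n : ℕ, g ^ n ∈ Ideal.span {f, g ^ (n + 1)} := by
  have : Module.Finite K (AdjoinRoot f) := (AdjoinRoot.powerBasis hf).finite
  have : IsArtinianRing (AdjoinRoot f) := .of_finite K _
  obtain ⟨n, y, hy⟩ := IsArtinian.exists_pow_succ_smul_dvd (AdjoinRoot.mk f g) (1 : AdjoinRoot f)
  obtain ⟨u, rfl⟩ := AdjoinRoot.mk_surjective y
  have hmk : AdjoinRoot.mk f (g ^ n) = AdjoinRoot.mk f (g ^ (n + 1) * u) := by
    simpa only [map_mul, map_pow, smul_eq_mul, mul_one] using hy.symm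
  obtain ⟨v, hv⟩ := AdjoinRoot.mk_eq_mk.1 hmk
  exact ⟨n, Ideal.mem_span_pair.2 ⟨v, u, by linear_combination -hv⟩⟩

section Domain

variable {R : Type*} [CommRing R] [IsDomain R]

lemma exists_C_mul_pow_mem_span_pair_pow_succ {f : R[X]} (hf : f ≠ 0) (g : R[X]) :
    ∃ (n : ℕ) (N : R), N ≠ 0 ∧ C N * g ^ n ∈ Ideal.span {f, g ^ (n + 1)} := by
  let K := FractionRing R
  let _ : Algebra R[X] K[X] := Polynomial.algebra R K
  have := Polynomial.isLocalization (nonZeroDivisors R) K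
  have hinj : Function.Injective (algebraMap R[X] K[X]) :=
    Polynomial.map_injective _ (IsFractionRing.injective R K)
  obtain ⟨n, hn⟩ :=
    exists_pow_mem_span_pair_pow_succ ((map_ne_zero_iff _ hinj).2 hf) (algebraMap R[X] K[X] g)
  rw [← map_pow, ← map_pow, ← Set.image_pair, ← Ideal.map_span,
    IsLocalization.mem_map_algebraMap_iff ((nonZeroDivisors R).map C)] at hn
  obtain ⟨⟨a, _, N, hN, rfl⟩, ha⟩ := hn
  have hCN : C N * g ^ n = a := hinj (by rw [← ha, map_mul, mul_comm])
  exact ⟨n, N, nonZeroDivisors.ne_zero hN, hCN ▸ a.2⟩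

lemma exists_forall_aeval_dvd_algebraMap {f : R[X]} (hf : f ≠ 0) (g : R[X]) :
    ∃ N : R, N ≠ 0 ∧ ∀ (A : Type*) [CommRing A] [IsDomain A] [Algebra R A] (z : A),
      aeval z f = 0 → aeval z g ≠ 0 → aeval z g ∣ algebraMap R A N := by
  obtain ⟨n, N, hN, hmem⟩ := exists_C_mul_pow_mem_span_pair_pow_succ hf g
  obtain ⟨u, v, huv⟩ := Ideal.mem_span_pair.1 hmem
  refine ⟨N, hN, fun A _ _ _ z hfz hgz => ⟨aeval z v, ?_⟩⟩
  have hz := congrArg (aeval z) huv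
  simp only [map_add, map_mul, map_pow, aeval_C, hfz, mul_zero, zero_add] at hz
  exact mul_right_cancel₀ (pow_ne_zero n hgz) (by linear_combination -hz)

lemma exists_forall_aeval_hasseDeriv_rootMultiplicity_dvd {f F : R[X]} (hf : f ≠ 0) (hF : F ≠ 0) :
    ∃ N : R, N ≠ 0 ∧ ∀ (A : Type*) [CommRing A] [IsDomain A] [Algebra R A] [FaithfulSMul R A]
      (z : A), aeval z f = 0 →
        aeval z (hasseDeriv ((F.map (algebraMap R A)).rootMultiplicity z) F) ∣
          algebraMap R A N := by
  choose N hN hdvd using fun i => exists_forall_aeval_dvd_algebraMap hf (hasseDeriv i F)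
  refine ⟨∏ i ∈ Finset.range (F.natDegree + 1), N i, Finset.prod_ne_zero_iff.2 fun i _ => hN i,
    fun A _ _ _ _ z hz => ?_⟩
  set m := (F.map (algebraMap R A)).rootMultiplicity z
  have hne : aeval z (hasseDeriv m F) ≠ 0 := aeval_hasseDeriv_rootMultiplicity_ne_zero hF z
  have hm : m ≤ F.natDegree := by
    by_contra! hlt
    exact hne (by rw [hasseDeriv_eq_zero_of_lt_natDegree F m hlt, map_zero])
  exact (hdvd m A z hz hne).trans
    (map_dvd _ (Finset.dvd_prod_of_mem N (Finset.mem_range_succ_iff.2 hm)))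

end Domain

lemma superFactorial_ne_zero (n : ℕ) : n.superFactorial ≠ 0 := by
  rw [← Nat.prod_Icc_factorial]
  exact Finset.prod_ne_zero_iff.2 fun i _ => i.factorial_ne_zero

section CommRing

variable {R : Type*} [CommRing R]

lemma dvd_det_vandermonde_mul_coeff {n : ℕ} (v : Fin n → R) {F : R[X]} (hF : F.natDegree < n)
    {q : R} (hq : ∀ j, q ∣ F.eval (v j)) (i : ℕ) :
    q ∣ (Matrix.vandermonde v).det * F.coeff i := by
  obtain hi | hi := le_or_gt n i
  · simp [coeff_eq_zero_of_natDegree_lt (hF.trans_le hi)]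
  let c : Fin n → R := fun j => F.coeff j
  have heval : (Matrix.vandermonde v).mulVec c = fun j => F.eval (v j) := by
    funext j
    simp [eval_eq_sum_range' hF, Finset.sum_range, Matrix.mulVec, dotProduct, c, mul_comm]
  have hcramer : (Matrix.vandermonde v).det • c =
      (Matrix.vandermonde v).adjugate.mulVec fun j => F.eval (v j) := by
    rw [← heval, Matrix.mulVec_mulVec, Matrix.adjugate_mul, Matrix.smul_mulVec, Matrix.one_mulVec]
  have hcoeff : (Matrix.vandermonde v).det * F.coeff i = _ := congrFun hcramer ⟨i, hi⟩
  rw [hcoeff, Matrix.mulVec, dotProduct]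
  exact Finset.dvd_sum fun j _ => (hq j).mul_left _

lemma dvd_superFactorial_mul_coeff {F : R[X]} {n : ℕ} (hF : F.natDegree ≤ n) {q : R}
    (hq : ∀ j : ℕ, q ∣ F.eval (j : R)) (i : ℕ) :
    q ∣ (n.superFactorial : R) * F.coeff i := by
  rw [← Matrix.det_vandermonde_id_eq_superFactorial]
  exact dvd_det_vandermonde_mul_coeff _ (Nat.lt_succ_of_le hF) (fun j => hq j) i

lemma coeff_comp_C_add_C_mul_X (F : R[X]) (r d : R) (i : ℕ) :
    (F.comp (C r + C d * X)).coeff i = (hasseDeriv i F).eval r * d ^ i := by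
  have htaylor : F.comp (C r + C d * X) = (taylor r F).comp (C d * X) := by
    simp [taylor_apply, comp_assoc, add_comm]
  rw [htaylor, comp_C_mul_X_coeff, taylor_coeff]

lemma mul_coeff_derivative_of_C_mul_eq_comp {h H : R[X]} {l r d : R}
    (hH : C l * H = h.comp (C r + C d * X)) (i : ℕ) :
    l * (derivative H).coeff i = (hasseDeriv i (derivative h)).eval r * d ^ (i + 1) := by
  have hderiv : C l * derivative H = C d * (derivative h).comp (C r + C d * X) := by
    simpa [derivative_comp] using congrArg derivative hH
  rw [← coeff_C_mul, hderiv, coeff_C_mul, coeff_comp_C_add_C_mul_X]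
  ring

lemma mul_coeff_natDegree_derivative_of_C_mul_eq_comp {h H : R[X]} {l r d : R}
    (hH : C l * H = h.comp (C r + C d * X)) :
    l * (derivative H).coeff (derivative h).natDegree =
      (derivative h).leadingCoeff * d ^ ((derivative h).natDegree + 1) := by
  rw [mul_coeff_derivative_of_C_mul_eq_comp hH, ← taylor_coeff, coeff_taylor_natDegree]

lemma dvd_leadingCoeff_mul_pow_of_C_mul_eq_comp {h H : R[X]} {l r d q s : R}
    (hH : C l * H = h.comp (C r + C d * X))
    (hq : q ∣ s * (derivative H).coeff (derivative h).natDegree) :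
    q ∣ s * (derivative h).leadingCoeff * d ^ ((derivative h).natDegree + 1) := by
  rw [mul_assoc, ← mul_coeff_natDegree_derivative_of_C_mul_eq_comp hH, mul_left_comm]
  exact hq.mul_left l

end CommRing

lemma dvd_mul_aeval_of_dvd_sub {R A : Type*} [CommRing R] [CommRing A] [Algebra R A] {t s z : A}
    {r : R} {g : R[X]} (hzr : t ∣ z - algebraMap R A r) (ht : t ∣ s * algebraMap R A (g.eval r)) :
    t ∣ s * aeval z g := by
  have hsub : t ∣ aeval z g - algebraMap R A (g.eval r) := by
    rw [← aeval_algebraMap_apply_eq_algebraMap_eval, ← eval_map_algebraMap, ← eval_map_algebraMap]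
    exact hzr.trans (sub_dvd_eval_sub _ _ _)
  have := dvd_add ht (hsub.mul_left s)
  rwa [← mul_add, add_sub_cancel] at this

section AuxiliaryDomain

variable {R : Type*} [CommRing R] [IsDomain R] {h H : R[X]} {l r d : R}

lemma ne_zero_of_C_mul_eq_comp (hh : derivative h ≠ 0) (hd : d ≠ 0)
    (hH : C l * H = h.comp (C r + C d * X)) : l ≠ 0 := by
  refine left_ne_zero_of_mul (b := (derivative H).coeff (derivative h).natDegree) ?_
  rw [mul_coeff_natDegree_derivative_of_C_mul_eq_comp hH]
  exact mul_ne_zero (leadingCoeff_ne_zero.2 hh) (pow_ne_zero _ hd)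

lemma natDegree_derivative_le_of_C_mul_eq_comp (hl : l ≠ 0)
    (hH : C l * H = h.comp (C r + C d * X)) :
    (derivative H).natDegree ≤ (derivative h).natDegree := by
  refine natDegree_le_iff_coeff_eq_zero.2 fun i hi => (mul_eq_zero_iff_left hl).1 ?_
  rw [mul_coeff_derivative_of_C_mul_eq_comp hH, hasseDeriv_eq_zero_of_lt_natDegree _ _ hi,
    eval_zero, zero_mul]

end AuxiliaryDomain

lemma map_coeff_derivative_dvd_map_eval_hasseDeriv {R A : Type*} [CommRing R] [CommRing A]
    [IsDomain A] (φ : R →+* A) {h H : R[X]} {l r d : R}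
    (hH : C l * H = h.comp (C r + C d * X)) {i : ℕ} (hd : φ d ≠ 0) (hl : φ d ^ (i + 1) ∣ φ l) :
    φ ((derivative H).coeff i) ∣ φ ((hasseDeriv i (derivative h)).eval r) := by
  obtain ⟨c, hc⟩ := hl
  have hcoeff := congrArg φ (mul_coeff_derivative_of_C_mul_eq_comp hH i)
  simp only [map_mul, map_pow, hc] at hcoeff
  exact ⟨c, mul_right_cancel₀ (pow_ne_zero (i + 1) hd) (by linear_combination -hcoeff)⟩

lemma prime_pow_dvd_mul_of_forall_dvd_mul_coeff_derivative {p : ℕ} [Fact p.Prime]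
    {h H : ℤ[X]} (hh : h ≠ 0) {l r d s N : ℤ} {w : ℕ} {z : ℤ_[p]} (hz : aeval z h = 0)
    (hN : aeval z (hasseDeriv (((derivative h).map (algebraMap ℤ ℤ_[p])).rootMultiplicity z)
      (derivative h)) ∣ (N : ℤ_[p]))
    (hd : d ≠ 0) (hl : (d : ℤ_[p]) ^ (h.map (algebraMap ℤ ℤ_[p])).rootMultiplicity z ∣ l)
    (hzr : (p : ℤ_[p]) ^ w ∣ z - r) (hH : C l * H = h.comp (C r + C d * X))
    (hs : ∀ i, (p : ℤ) ^ w ∣ s * (derivative H).coeff i) :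
    (p : ℤ) ^ w ∣ s * N := by
  have hhp : h.map (algebraMap ℤ ℤ_[p]) ≠ 0 :=
    (Polynomial.map_ne_zero_iff (algebraMap ℤ ℤ_[p]).injective_int).2 hh
  rw [← rootMultiplicity_derivative_add_one hhp (by rwa [IsRoot, eval_map_algebraMap]),
    derivative_map] at hl
  set i := ((derivative h).map (algebraMap ℤ ℤ_[p])).rootMultiplicity z
  have hcoeff : (p : ℤ_[p]) ^ w ∣ s * ((derivative H).coeff i : ℤ) := by
    exact_mod_cast (PadicInt.pow_p_dvd_int_iff w _).2 (hs i)
  have hr : (p : ℤ_[p]) ^ w ∣ s * ((hasseDeriv i (derivative h)).eval r : ℤ) :=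
    hcoeff.trans (mul_dvd_mul_left _ (map_coeff_derivative_dvd_map_eval_hasseDeriv
      (Int.castRingHom ℤ_[p]) hH (Int.cast_ne_zero.2 hd) hl))
  have hsN : (p : ℤ_[p]) ^ w ∣ s * N :=
    (dvd_mul_aeval_of_dvd_sub hzr hr).trans (mul_dvd_mul_left _ hN)
  exact (PadicInt.pow_p_dvd_int_iff w _).1 (by exact_mod_cast hsN)

lemma gcd_dvd_mul_of_forall_dvd_mul_coeff_derivative {h H : ℤ[X]}
    {z : ∀ (p : ℕ) [Fact p.Prime], ℤ_[p]} {lam : ℕ →* ℕ} {d : ℕ} {r q s N : ℤ}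
    (hh : h ≠ 0) (hd : d ≠ 0)
    (hz : ∀ (p : ℕ) [Fact p.Prime], aeval (z p) h = 0)
    (hlam : ∀ (p : ℕ) [Fact p.Prime],
      lam p = p ^ (h.map (algebraMap ℤ ℤ_[p])).rootMultiplicity (z p))
    (hr : ∀ (p : ℕ) [Fact p.Prime] (α : ℕ), p ^ α ∣ d → (p : ℤ_[p]) ^ α ∣ z p - r)
    (hH : C (lam d : ℤ) * H = h.comp (C r + C (d : ℤ) * X))
    (hN : ∀ (p : ℕ) [Fact p.Prime],
      aeval (z p) (hasseDeriv (((derivative h).map (algebraMap ℤ ℤ_[p])).rootMultiplicity (z p))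
        (derivative h)) ∣ (N : ℤ_[p]))
    (hq : ∀ i, q ∣ s * (derivative H).coeff i) :
    gcd q d ∣ s * N := by
  refine gcd_dvd_of_forall_prime_pow_dvd fun p _ w hpq hpd => ?_
  have hdlam := natCast_pow_dvd_natCast_map (p := p) (hlam p).symm.dvd hd
  have hzr : (p : ℤ_[p]) ^ w ∣ z p - r := hr p w (by exact_mod_cast hpd)
  exact prime_pow_dvd_mul_of_forall_dvd_mul_coeff_derivative hh (hz p) (hN p)
    (Nat.cast_ne_zero.2 hd) (by exact_mod_cast hdlam) hzr hH fun i => hpq.trans (hq i)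

theorem stmt6_general {h : ℤ[X]} (hdeg : 0 < h.natDegree) :
    ∃ S : Finset ℤ, (∀ s ∈ S, 2 ≤ s) ∧
      ∀ (z : ∀ (p : ℕ) [Fact p.Prime], ℤ_[p]) (lam : ℕ →* ℕ),
        (∀ (p : ℕ) [Fact p.Prime], aeval (z p) h = 0) →
        (∀ (p : ℕ) [Fact p.Prime],
          lam p = p ^ (h.map (algebraMap ℤ ℤ_[p])).rootMultiplicity (z p)) →
        ∀ (d : ℕ) (r : ℤ) (H : ℤ[X]), 0 < d →
          (∀ (p : ℕ) [Fact p.Prime] (α : ℕ), p ^ α ∣ d → (p : ℤ_[p]) ^ α ∣ z p - r) →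
          C (lam d : ℤ) * H = h.comp (C r + C (d : ℤ) * X) →
          ∀ q : ℤ, 2 ≤ q → (∀ n : ℤ, q ∣ (derivative H).eval n) → q ∈ S := by
  have hh : h ≠ 0 := ne_zero_of_natDegree_gt hdeg
  have hh' : derivative h ≠ 0 := mt derivative_eq_zero.1 hdeg.ne'
  obtain ⟨N, hN0, hN⟩ := exists_forall_aeval_hasseDeriv_rootMultiplicity_dvd hh hh'
  set n := (derivative h).natDegree
  let s : ℤ := n.superFactorial
  let M : ℤ := s * (derivative h).leadingCoeff * (s * N) ^ (n + 1)
  have hs0 : s ≠ 0 := Nat.cast_ne_zero.2 (superFactorial_ne_zero n)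
  have hM0 : M ≠ 0 := mul_ne_zero (mul_ne_zero hs0 (leadingCoeff_ne_zero.2 hh'))
    (pow_ne_zero _ (mul_ne_zero hs0 hN0))
  refine ⟨Finset.Icc 2 |M|, fun q hq => (Finset.mem_Icc.1 hq).1,
    fun z lam hz hlam d r H hd hr hH q hq2 hq => Finset.mem_Icc.2 ⟨hq2, ?_⟩⟩
  have hlam0 : (lam d : ℤ) ≠ 0 := ne_zero_of_C_mul_eq_comp hh' (Nat.cast_ne_zero.2 hd.ne') hH
  have hcoeff : ∀ i, q ∣ s * (derivative H).coeff i :=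
    dvd_superFactorial_mul_coeff (natDegree_derivative_le_of_C_mul_eq_comp hlam0 hH) fun j => hq j
  have hgcd : gcd q d ∣ s * N := gcd_dvd_mul_of_forall_dvd_mul_coeff_derivative hh hd.ne' hz hlam
    hr hH (fun p _ => hN _ (z p) (hz p)) hcoeff
  have hqM : q ∣ M :=
    dvd_mul_pow_of_gcd_dvd (dvd_leadingCoeff_mul_pow_of_C_mul_eq_comp hH (hcoeff n)) hgcd
  exact Int.le_of_dvd (abs_pos.2 hM0) ((dvd_abs _ _).2 hqM)

end

/-- The moduli `q ≥ 2` modulo which some derivative `h_d'` vanishes identically all lie in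
a finite set depending only on `h` (and the chosen roots). -/
theorem stmt6
    (k : ℕ) (hk : 0 < k)
    (h : Polynomial ℤ) (hdeg : h.natDegree = k) (hlead : 0 < h.leadingCoeff)
    (hint : ∀ q : ℕ, 0 < q → ∃ n : ℤ, (q : ℤ) ∣ h.eval n)
    (z : ∀ (p : ℕ) [Fact p.Prime], ℤ_[p])
    (hz : ∀ (p : ℕ) [Fact p.Prime], Polynomial.aeval (z p) h = 0)
    (lam : ℕ → ℕ) (hlam1 : lam 1 = 1)
    (hlamMul : ∀ a b : ℕ, lam (a * b) = lam a * lam b)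
    (hlamP : ∀ (p : ℕ) [Fact p.Prime],
      lam p = p ^ Polynomial.rootMultiplicity (z p) (h.map (algebraMap ℤ ℤ_[p])))
    (r : ℕ → ℤ)
    (hr : ∀ d : ℕ, 0 < d → -(d : ℤ) < r d ∧ r d ≤ 0)
    (hrz : ∀ d : ℕ, 0 < d → ∀ (p : ℕ) [Fact p.Prime], ∀ α : ℕ, p ^ α ∣ d →
      (p : ℤ_[p]) ^ α ∣ (z p - (r d : ℤ_[p])))
    (H : ℕ → Polynomial ℤ)
    (hH : ∀ d : ℕ, 0 < d →
      Polynomial.C (lam d : ℤ) * H d =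
        h.comp (Polynomial.C (r d) + Polynomial.C (d : ℤ) * Polynomial.X))
    :
    ∃ S : Finset ℤ, (∀ s ∈ S, 2 ≤ s) ∧
      ∀ d : ℕ, 0 < d → ∀ q : ℤ, 2 ≤ q →
        (∀ n : ℤ, q ∣ (Polynomial.derivative (H d)).eval n) → q ∈ S := by
  obtain ⟨S, hS, hmem⟩ := stmt6_general (hdeg ▸ hk)
  exact ⟨S, hS, fun d hd q => hmem z ⟨⟨lam, hlam1⟩, hlamMul⟩ hz hlamP d (r d) (H d) hd
    (hrz d hd) (hH d hd) q⟩
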